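/- (C_ℓ Bailey Transform, second orthogonality relation.) Let ℓ ≥ 1, let q, x_1, …, x_ℓ be nonzero complex numbers such that every q-shifted factorial occurring in a denominator below is nonzero. With M(i;j) := ∏_{r,s=1}^{ℓ} [ ((q x_r/x_s) q^{j_r−j_s}; q)_{i_r−j_r}^{−1} · (q x_r x_s q^{j_r+j_s}; q)_{i_r−j_r}^{−1} ] and M*(i;j) := ∏_{r,s=1}^{ℓ} [ ((q x_r/x_s) q^{j_r−j_s}; q)_{i_r−j_r}^{−1} · (x_r x_s q^{j_r+i_s}; q)_{i_r−j_r}^{−1} ] · ∏_{1≤r<s≤ℓ} (1 − x_r x_s q^{j_r+j_s})/(1 − x_r x_s q^{i_r+i_s}) · (−1)^{|i|−|j|} q^{binom(|i|−|j|,2)}, for all vectors i, j of nonnegative integers of length ℓ, the sum over all vectors y with j_k ≤ y_k ≤ i_k for k = 1, …, ℓ of M*(i;y)·M(y;j) equals ∏_{k=1}^{ℓ} δ(i_k, j_k), where δ(r,s) = 1 if r = s and 0 otherwise. (Together with the first orthogonality relation this says M and M* are mutually inverse infinite lower-triangular matrices.) -/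

import Mathlib

set_option autoImplicit false
set_option maxHeartbeats 1000000

open Finset

/-- The `q`-shifted factorial `(a; q)_n`, extended to all integers `n` by the
standard convention `(a;q)_{-m} = 1 / ∏_{k=1}^{m} (1 - a q^{-k})`. -/
noncomputable def qp (a q : ℂ) (n : ℤ) : ℂ :=
  if 0 ≤ n then ∏ k ∈ Finset.range n.toNat, (1 - a * q ^ (k : ℤ))
  else (∏ k ∈ Finset.range (-n).toNat, (1 - a * q ^ (-(k : ℤ) - 1)))⁻¹

/-- The `C_ℓ` Bailey transform matrix `M(i;j)`. -/
noncomputable def MC (ℓ : ℕ) (q : ℂ) (x : Fin ℓ → ℂ) (i j : Fin ℓ → ℕ) : ℂ :=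
  ∏ r, ∏ s,
    ((qp (q * (x r / x s) * q ^ ((j r : ℤ) - (j s : ℤ))) q ((i r : ℤ) - (j r : ℤ)))⁻¹ *
     (qp (q * (x r * x s) * q ^ ((j r : ℤ) + (j s : ℤ))) q ((i r : ℤ) - (j r : ℤ)))⁻¹)

/-- The `C_ℓ` Bailey transform matrix `M*(i;j)`. -/
noncomputable def MCstar (ℓ : ℕ) (q : ℂ) (x : Fin ℓ → ℂ) (i j : Fin ℓ → ℕ) : ℂ :=
  (∏ r, ∏ s,
    ((qp (q * (x r / x s) * q ^ ((j r : ℤ) - (j s : ℤ))) q ((i r : ℤ) - (j r : ℤ)))⁻¹ *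
     (qp ((x r * x s) * q ^ ((j r : ℤ) + (i s : ℤ))) q ((i r : ℤ) - (j r : ℤ)))⁻¹)) *
  (∏ r, ∏ s, if r < s then
      (1 - x r * x s * q ^ ((j r : ℤ) + (j s : ℤ))) /
        (1 - x r * x s * q ^ ((i r : ℤ) + (i s : ℤ)))
    else 1) *
  (-1 : ℂ) ^ ((∑ s, (i s : ℤ)) - ∑ s, (j s : ℤ)) *
  q ^ (((∑ s, (i s : ℤ)) - ∑ s, (j s : ℤ)) *
        ((∑ s, (i s : ℤ)) - (∑ s, (j s : ℤ)) - 1) / 2)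

/-- auxiliary -/
noncomputable def HH {ℓ : ℕ} (P : Fin ℓ → ℕ → ℂ) (i j : Fin ℓ → ℕ) (r s : Fin ℓ) (t : ℕ) : ℂ :=
  if j s < i s then ∏ k ∈ Finset.Ioo (j s) (i s), (1 - P r t * P s k)
  else if r = s then 1 else (1 - P r t * P s (j s))⁻¹

/-- auxiliary -/
noncomputable def WW {ℓ : ℕ} (P : Fin ℓ → ℕ → ℂ) (i j : Fin ℓ → ℕ) (r s : Fin ℓ) (t : ℕ) : ℂ :=
  if r = s then HH P i j r s t * (∏ k ∈ (Finset.Icc (j s) (i s)).erase t, (P r t - P s k))⁻¹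
  else P r t * HH P i j r s t * (∏ k ∈ Finset.Icc (j s) (i s), (P r t - P s k))⁻¹

open Polynomial in
lemma recip_poly (g : ℂ[X]) (d : ℕ) (hg : g.natDegree ≤ d) :
    ∃ f : ℂ[X], f.natDegree ≤ 2 * d ∧ ∀ z : ℂ, z ≠ 0 → f.eval z = z ^ d * g.eval (z + z⁻¹) := by
  refine ⟨∑ k ∈ Finset.range (d+1), C (g.coeff k) * (X ^ (d - k) * (X ^ 2 + 1) ^ k), ?_, ?_⟩
  · apply natDegree_sum_le_of_forall_le
    intro k hk
    rw [Finset.mem_range] at hk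
    have h2 : (X ^ 2 + 1 : ℂ[X]).natDegree ≤ 2 := by compute_degree
    calc _ ≤ _ := natDegree_C_mul_le _ _
      _ ≤ (d - k) + k * 2 := by
        refine natDegree_mul_le.trans (add_le_add (by simp) ?_)
        exact natDegree_pow_le.trans (Nat.mul_le_mul_left _ h2)
      _ ≤ _ := by omega
  · intro z hz
    rw [eval_eq_sum_range' (Nat.lt_succ_of_le hg), eval_finsetSum, Finset.mul_sum]
    refine Finset.sum_congr rfl fun k hk => ?_
    rw [Finset.mem_range] at hk
    obtain ⟨e, rfl⟩ := Nat.exists_eq_add_of_le (Nat.le_of_lt_succ hk)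
    simp only [eval_mul, eval_C, eval_pow, eval_X, eval_add, eval_one, Nat.add_sub_cancel_left]
    have : z ^ 2 + 1 = z * (z + z⁻¹) := by field_simp
    rw [this, mul_pow, pow_add]; ring

open Polynomial in
lemma lagrange_zero {ι : Type*} [DecidableEq ι] (T : Finset ι) (v : ι → ℂ) (hv : Set.InjOn v T)
    (f : ℂ[X]) (hf : f.natDegree + 1 < T.card) :
    ∑ a ∈ T, f.eval (v a) * (∏ b ∈ T.erase a, (v a - v b))⁻¹ = 0 := by
  have h := Lagrange.coeff_eq_sum hv (P := f)
    (lt_of_le_of_lt degree_le_natDegree (by exact_mod_cast (by omega)))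
  rw [coeff_eq_zero_of_natDegree_lt (by omega)] at h
  rw [h]; simp [div_eq_mul_inv]

open Polynomial in
lemma det_vanish {ℓ : ℕ} (P : Fin ℓ → ℕ → ℂ) (i j : Fin ℓ → ℕ) (hji : ∀ k, j k ≤ i k)
    (r0 : Fin ℓ) (hr0 : j r0 < i r0) (hP : ∀ r t, P r t ≠ 0)
    (hinj : ∀ r s k l, P r k = P s l → r = s ∧ k = l)
    (hC : ∀ r s, r ≠ s → ∀ k l, P r k * P s l ≠ 1) :
    Matrix.det (fun r (k : Fin ℓ) => ∑ t ∈ Finset.Icc (j r) (i r),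
      (∏ s, WW P i j r s t) * (P r t + (P r t)⁻¹) ^ (k : ℕ)) = 0 := by
  classical
  set B : Matrix (Fin ℓ) (Fin ℓ) ℂ := fun r (k : Fin ℓ) => ∑ t ∈ Finset.Icc (j r) (i r),
      (∏ s, WW P i j r s t) * (P r t + (P r t)⁻¹) ^ (k : ℕ) with hB
  by_contra hdet
  have hu : IsUnit B.det := isUnit_iff_ne_zero.mpr hdet
  set v : Fin ℓ → ℂ := B⁻¹.mulVec (Pi.single r0 1) with hv
  have hBv : B.mulVec v = Pi.single r0 1 := by
    rw [hv, Matrix.mulVec_mulVec, Matrix.mul_nonsing_inv _ hu, Matrix.one_mulVec]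
  set p : ℂ[X] := ∑ k : Fin ℓ, C (v k) * X ^ (k : ℕ) with hp
  have hpev : ∀ z, p.eval z = ∑ k : Fin ℓ, v k * z ^ (k : ℕ) := by
    intro z; rw [hp, eval_finsetSum]; simp
  have hrow : ∀ r, ∑ t ∈ Finset.Icc (j r) (i r),
      (∏ s, WW P i j r s t) * p.eval (P r t + (P r t)⁻¹) = (Pi.single r0 (1:ℂ) : Fin ℓ → ℂ) r := by
    intro r
    rw [← hBv]
    simp only [Matrix.mulVec, dotProduct, hB, hpev, Finset.mul_sum, Finset.sum_mul]
    rw [Finset.sum_comm]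
    refine Finset.sum_congr rfl fun k _ => Finset.sum_congr rfl fun t _ => by ring
  set S : Finset (Fin ℓ) := Finset.univ.filter (fun s => j s < i s) with hS
  have hr0S : r0 ∈ S := by simp [hS, hr0]
  have hScard : 1 ≤ S.card := Finset.card_pos.mpr ⟨r0, hr0S⟩
  have hnS : ∀ s, s ∈ Sᶜ → i s = j s := by
    intro s hs
    simp [hS] at hs
    exact le_antisymm hs (hji s)
  set zc : Fin ℓ → ℂ := fun s => P s (j s) + (P s (j s))⁻¹ with hzc
  have hz0 : ∀ s ∈ Sᶜ, p.eval (zc s) = 0 := by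
    intro s hs
    have h1 := hrow s
    have hsr : s ≠ r0 := by rintro rfl; exact (Finset.mem_compl.mp hs) hr0S
    rw [hnS s hs, Finset.Icc_self, Finset.sum_singleton, Pi.single_eq_of_ne hsr] at h1
    rcases mul_eq_zero.mp h1 with h | h
    · exfalso; apply hdet
      apply Matrix.det_eq_zero_of_row_eq_zero s
      intro k
      simp [hB, hnS s hs, h]
    · exact h
  have hzinj : Function.Injective zc := by
    intro a b hab
    by_contra hne
    have ha := hP a (j a)
    have hb := hP b (j b)
    have h1 : (P a (j a) - P b (j b)) * (P a (j a) * P b (j b) - 1) = 0 := by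
      have : P a (j a) + (P a (j a))⁻¹ = P b (j b) + (P b (j b))⁻¹ := hab
      field_simp at this
      linear_combination this
    rcases mul_eq_zero.mp h1 with h | h
    · exact hne (hinj _ _ _ _ (sub_eq_zero.mp h)).1
    · exact hC a b hne _ _ (sub_eq_zero.mp h)
  have hdvd : ∏ s ∈ Sᶜ, (X - C (zc s)) ∣ p := by
    apply Finset.prod_dvd_of_coprime
    · intro a _ b _ hab
      exact pairwise_coprime_X_sub_C hzinj hab
    · intro s hs
      exact dvd_iff_isRoot.mpr (hz0 s hs)
  obtain ⟨g, hg⟩ := hdvd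
  have hgdeg : g.natDegree ≤ S.card - 1 := by
    by_cases hg0 : g = 0
    · simp [hg0]
    have hD : (∏ s ∈ Sᶜ, (X - C (zc s))).Monic := monic_prod_of_monic _ _ fun s _ => monic_X_sub_C _
    have h1 : p.natDegree = (Sᶜ).card + g.natDegree := by
      rw [hg, hD.natDegree_mul' hg0, natDegree_prod_of_monic _ _ fun s _ => monic_X_sub_C _]
      simp
    have h2 : p.natDegree ≤ ℓ - 1 := by
      apply natDegree_sum_le_of_forall_le
      intro k _
      refine (natDegree_C_mul_X_pow_le _ _).trans ?_
      have := k.2; omega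
    rw [Finset.card_compl, Fintype.card_fin] at h1
    have h3 : S.card ≤ ℓ := by simpa using Finset.card_le_univ S
    omega
  obtain ⟨f1, hf1d, hf1⟩ := recip_poly g _ hgdeg
  set f : ℂ[X] := f1 * ∏ s ∈ S, ∏ k ∈ Finset.Ioo (j s) (i s), (1 - C (P s k) * X) with hf
  set T : Finset (Σ _ : Fin ℓ, ℕ) := S.sigma (fun s => Finset.Icc (j s) (i s)) with hT
  have hfd : f.natDegree + 1 < T.card := by
    have h1 : (∏ s ∈ S, ∏ k ∈ Finset.Ioo (j s) (i s), (1 - C (P s k) * X)).natDegree ≤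
        ∑ s ∈ S, (i s - j s - 1) := by
      refine (natDegree_prod_le _ _).trans (Finset.sum_le_sum fun s _ => ?_)
      refine (natDegree_prod_le _ _).trans ?_
      calc _ ≤ ∑ k ∈ Finset.Ioo (j s) (i s), 1 := Finset.sum_le_sum fun k _ => by compute_degree
        _ = _ := by simp
    have h2 : T.card = ∑ s ∈ S, (i s - j s - 1) + 2 * S.card := by
      rw [hT, Finset.card_sigma, mul_comm, ← smul_eq_mul, ← Finset.sum_const, ← Finset.sum_add_distrib]
      refine Finset.sum_congr rfl fun s hs => ?_
      simp [hS] at hs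
      simp; omega
    have h3 : f.natDegree ≤ 2 * (S.card - 1) + ∑ s ∈ S, (i s - j s - 1) :=
      natDegree_mul_le.trans (add_le_add hf1d h1)
    omega
  have hsum := lagrange_zero T (fun a => P a.1 a.2) (by
    rintro ⟨a, k⟩ _ ⟨b, l⟩ _ hab
    obtain ⟨rfl, rfl⟩ := hinj _ _ _ _ hab
    rfl) f hfd
  have key : ∀ r ∈ S, ∀ t ∈ Finset.Icc (j r) (i r),
      (∏ s, WW P i j r s t) * p.eval (P r t + (P r t)⁻¹) =
      (∏ s ∈ Sᶜ, (-(P s (j s))⁻¹)) * (f.eval (P r t) *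
        (∏ b ∈ T.erase ⟨r, t⟩, (P r t - P b.1 b.2))⁻¹) := by
    intro r hr t ht
    have e1 : ∏ b ∈ T.erase ⟨r, t⟩, (P r t - P b.1 b.2) =
        (∏ k ∈ (Finset.Icc (j r) (i r)).erase t, (P r t - P r k)) *
        ∏ s ∈ S.erase r, ∏ k ∈ Finset.Icc (j s) (i s), (P r t - P s k) := by
      have : T.erase ⟨r, t⟩ = ({r} : Finset (Fin ℓ)).sigma (fun s => (Finset.Icc (j s) (i s)).erase t) ∪
          (S.erase r).sigma (fun s => Finset.Icc (j s) (i s)) := by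
        ext ⟨a, k⟩
        simp only [hT, Finset.mem_erase, Finset.mem_sigma, Finset.mem_union, Finset.mem_singleton]
        by_cases har : a = r
        · subst har; simp [hr]
        · simp [har]
      rw [this, Finset.prod_union, Finset.prod_sigma, Finset.prod_sigma, Finset.prod_singleton]
      rw [Finset.disjoint_left]
      rintro ⟨a, k⟩ h1 h2
      simp at h1 h2
      exact h2.1.1 h1.1
    have e2 : ∏ s, WW P i j r s t = (∏ s ∈ S.erase r, WW P i j r s t) * WW P i j r r t *
        ∏ s ∈ Sᶜ, WW P i j r s t := by
      rw [Finset.prod_erase_mul _ _ hr, Finset.prod_mul_prod_compl]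
    have e3 : ∏ s ∈ S.erase r, WW P i j r s t = P r t ^ (S.card - 1) *
        (∏ s ∈ S.erase r, ∏ k ∈ Finset.Ioo (j s) (i s), (1 - P r t * P s k)) *
        (∏ s ∈ S.erase r, ∏ k ∈ Finset.Icc (j s) (i s), (P r t - P s k))⁻¹ := by
      rw [← Finset.card_erase_of_mem hr, ← Finset.prod_const, ← Finset.prod_inv_distrib,
        ← Finset.prod_mul_distrib, ← Finset.prod_mul_distrib]
      refine Finset.prod_congr rfl fun s hs => ?_
      rw [Finset.mem_erase] at hs
      have hs2 : j s < i s := by simpa [hS] using hs.2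
      rw [WW, if_neg (Ne.symm hs.1), HH, if_pos hs2]
    have hr2 : j r < i r := by simpa [hS] using hr
    have e4 : WW P i j r r t = (∏ k ∈ Finset.Ioo (j r) (i r), (1 - P r t * P r k)) *
        (∏ k ∈ (Finset.Icc (j r) (i r)).erase t, (P r t - P r k))⁻¹ := by
      rw [WW, if_pos rfl, HH, if_pos hr2]
    have e5 : (∏ s ∈ Sᶜ, WW P i j r s t) * (∏ s ∈ Sᶜ, (X - C (zc s))).eval (P r t + (P r t)⁻¹)
        = ∏ s ∈ Sᶜ, (-(P s (j s))⁻¹) := by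
      rw [eval_prod, ← Finset.prod_mul_distrib]
      refine Finset.prod_congr rfl fun s hs => ?_
      have hrs : r ≠ s := by rintro rfl; exact (Finset.mem_compl.mp hs) hr
      have h1 := hnS s hs
      rw [WW, if_neg hrs, HH, if_neg (by omega), if_neg hrs, h1, Finset.Icc_self, Finset.prod_singleton]
      simp only [eval_sub, eval_X, eval_C, hzc]
      have a1 : P r t - P s (j s) ≠ 0 := fun h => hrs (hinj _ _ _ _ (sub_eq_zero.mp h)).1
      have a2 : 1 - P r t * P s (j s) ≠ 0 := fun h => hC r s hrs _ _ (sub_eq_zero.mp h).symm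
      have a3 := hP r t
      have a4 := hP s (j s)
      field_simp
      ring
    have e6 : f.eval (P r t) = P r t ^ (S.card - 1) * g.eval (P r t + (P r t)⁻¹) *
        ((∏ s ∈ S.erase r, ∏ k ∈ Finset.Ioo (j s) (i s), (1 - P r t * P s k)) *
          ∏ k ∈ Finset.Ioo (j r) (i r), (1 - P r t * P r k)) := by
      rw [Finset.prod_erase_mul S (fun s => ∏ k ∈ Finset.Ioo (j s) (i s), (1 - P r t * P s k)) hr,
        hf, eval_mul, hf1 _ (hP r t), eval_prod]
      congr 1
      refine Finset.prod_congr rfl fun s hs => ?_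
      rw [eval_prod]
      refine Finset.prod_congr rfl fun k hk => ?_
      simp only [eval_sub, eval_one, eval_mul, eval_C, eval_X]
      ring
    rw [e1, e2, e3, e4, e6, ← e5, hg, eval_mul, mul_inv]
    ring
  have hone : ∑ r ∈ S, ∑ t ∈ Finset.Icc (j r) (i r),
      (∏ s, WW P i j r s t) * p.eval (P r t + (P r t)⁻¹) = 1 := by
    rw [Finset.sum_congr rfl fun r _ => hrow r, Finset.sum_eq_single r0]
    · simp
    · intro b _ hb
      exact Pi.single_eq_of_ne hb 1
    · intro h
      exact absurd hr0S h
  rw [Finset.sum_congr rfl fun r hr => Finset.sum_congr rfl fun t ht => key r hr t ht] at hone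
  simp only [← Finset.mul_sum] at hone
  rw [hT, Finset.sum_sigma] at hsum
  simp only [← hT] at hsum
  rw [hsum, mul_zero] at hone
  exact zero_ne_one hone

/-- auxiliary -/
def bb (k : ℤ) : ℤ := k * (k - 1) / 2

lemma two_bb (k : ℤ) : 2 * bb k = k * (k - 1) := by
  have : Even (k * (k - 1)) := Int.even_mul_pred_self k
  exact Int.mul_ediv_cancel' this.two_dvd

lemma qp_zero' (a q : ℂ) : qp a q 0 = 1 := by simp [qp]

lemma qp_nat (a q : ℂ) (n : ℕ) : qp a q n = ∏ k ∈ Finset.range n, (1 - a * q ^ (k : ℤ)) := by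
  simp [qp]

lemma qp_succ_nat (a q : ℂ) (n : ℕ) : qp a q ((n : ℤ) + 1) = qp a q n * (1 - a * q ^ (n : ℤ)) := by
  have : (n : ℤ) + 1 = ((n + 1 : ℕ) : ℤ) := by push_cast; ring
  rw [this, qp_nat, qp_nat, Finset.prod_range_succ]

lemma qp_succ_int (a q : ℂ) (h : ∀ k : ℤ, a * q ^ k ≠ 1) (n : ℤ) :
    qp a q (n + 1) = qp a q n * (1 - a * q ^ n) := by
  obtain ⟨m, rfl | rfl⟩ := n.eq_nat_or_neg
  · exact qp_succ_nat a q m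
  · rcases m with _ | m
    · simpa using qp_succ_nat a q 0
    · have hne : 1 - a * q ^ (-((m + 1 : ℕ) : ℤ)) ≠ 0 := fun h0 => h _ (sub_eq_zero.mp h0).symm
      have e1 : qp a q (-((m + 1 : ℕ) : ℤ)) =
          (∏ k ∈ Finset.range (m + 1), (1 - a * q ^ (-(k : ℤ) - 1)))⁻¹ := by
        rw [qp, if_neg (by omega)]; simp
      have e2 : qp a q (-((m + 1 : ℕ) : ℤ) + 1) =
          (∏ k ∈ Finset.range m, (1 - a * q ^ (-(k : ℤ) - 1)))⁻¹ := by
        rcases m with _ | m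
        · simp [qp]
        · rw [qp, if_neg (by omega)]
          have : (-(-((m + 1 + 1 : ℕ) : ℤ) + 1)).toNat = m + 1 := by omega
          rw [this]
      have e3 : (-((m + 1 : ℕ) : ℤ)) = -(m : ℤ) - 1 := by push_cast; ring
      rw [e1, e2, Finset.prod_range_succ, mul_inv, ← e3, inv_mul_cancel_right₀ hne]

lemma qp_ne_int (a q : ℂ) (h : ∀ k : ℤ, a * q ^ k ≠ 1) (n : ℤ) : qp a q n ≠ 0 := by
  have h' : ∀ k : ℤ, 1 - a * q ^ k ≠ 0 := fun k h0 => h k (sub_eq_zero.mp h0).symm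
  rw [qp]
  split_ifs
  · exact Finset.prod_ne_zero_iff.mpr fun k _ => h' _
  · exact inv_ne_zero (Finset.prod_ne_zero_iff.mpr fun k _ => h' _)

lemma qp_ne_nat (a q : ℂ) (h : ∀ k : ℕ, a * q ^ (k : ℤ) ≠ 1) (n : ℕ) : qp a q n ≠ 0 := by
  rw [qp_nat]
  exact Finset.prod_ne_zero_iff.mpr fun k _ h0 => h k (sub_eq_zero.mp h0).symm

lemma qp_shift (a q : ℂ) (hq : q ≠ 0) (c : ℤ)
    (h : ∀ k ≥ c, qp a q (k + 1) = qp a q k * (1 - a * q ^ k)) (n : ℕ) :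
    qp (a * q ^ c) q n * qp a q c = qp a q (c + n) := by
  induction n with
  | zero => simp [qp_zero']
  | succ n ih =>
    have e : c + ((n + 1 : ℕ) : ℤ) = (c + n) + 1 := by push_cast; ring
    have e' : ((n + 1 : ℕ) : ℤ) = (n : ℤ) + 1 := by push_cast; ring
    rw [e, h _ (by omega), ← ih, e', qp_succ_nat, zpow_add₀ hq]
    ring

/-- integer version -/
lemma qp_shift_int (a q : ℂ) (hq : q ≠ 0) (h : ∀ k : ℤ, a * q ^ k ≠ 1) (c d n : ℤ) (hn : 0 ≤ n)
    (hd : c + n = d) :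
    qp (a * q ^ c) q n * qp a q c = qp a q d := by
  lift n to ℕ using hn
  rw [qp_shift a q hq c (fun k _ => qp_succ_int a q h k), hd]

lemma qp_shift_nat (a q : ℂ) (hq : q ≠ 0) (c d n : ℤ) (hc : 0 ≤ c) (hn : 0 ≤ n) (hd : c + n = d) :
    qp (a * q ^ c) q n * qp a q c = qp a q d := by
  lift n to ℕ using hn
  rw [qp_shift a q hq c _, hd]
  intro k hk
  lift k to ℕ using (by omega)
  exact qp_succ_nat a q k

lemma T_rel (u q : ℂ) (hq : q ≠ 0) (hu : u ≠ 0) (h : ∀ k : ℤ, u * q ^ k ≠ 1)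
    (h' : ∀ k : ℤ, u⁻¹ * q ^ k ≠ 1) (k k' : ℤ) (hk : k' = 1 - k) :
    qp u⁻¹ q k * qp u q k' = (1 - u) * (-u⁻¹) ^ k * q ^ bb k := by
  subst hk
  have hu' : (-u⁻¹) ≠ 0 := neg_ne_zero.mpr (inv_ne_zero hu)
  have step : ∀ k : ℤ, qp u⁻¹ q (k + 1) * qp u q (1 - (k + 1)) =
      (qp u⁻¹ q k * qp u q (1 - k)) * (-u⁻¹ * q ^ k) := by
    intro k
    have e1 := qp_succ_int u q h (-k)
    rw [show 1 - (k + 1) = -k by ring, show 1 - k = -k + 1 by ring, e1, qp_succ_int _ _ h', zpow_neg]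
    have := zpow_ne_zero k hq
    field_simp
    ring
  have bstep : ∀ k : ℤ, bb (k + 1) = bb k + k := by
    intro k
    have h1 := two_bb (k + 1)
    have h2 := two_bb k
    linarith
  induction k using Int.induction_on with
  | zero =>
    have := qp_succ_nat u q 0
    simp [bb, qp_zero'] at this ⊢
    exact this
  | succ k ih =>
    rw [step, ih, bstep, zpow_add₀ hq, zpow_add_one₀ hu']; ring
  | pred k ih =>
    have s1 := step (-(k : ℤ) - 1)
    have b1 := bstep (-(k : ℤ) - 1)
    rw [sub_add_cancel] at s1 b1
    rw [ih, b1, zpow_add₀ hq] at s1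
    have hz := zpow_ne_zero (-(k : ℤ) - 1) hq
    have e : (-u⁻¹) ^ (-(k : ℤ)) = (-u⁻¹) ^ (-(k : ℤ) - 1) * (-u⁻¹) := by
      rw [← zpow_add_one₀ hu']; congr 1; ring
    rw [e] at s1
    apply mul_right_cancel₀ (mul_ne_zero hu' hz)
    rw [← s1]; ring

lemma prod_form (a b q : ℂ) (hq : q ≠ 0) (ha : a ≠ 0) (h : ∀ k : ℤ, b / a * q ^ k ≠ 1)
    (m j i : ℕ) (hji : j ≤ i) (d c : ℤ) (hd : d = (i : ℤ) - m + 1) (hc : c = (j : ℤ) - m) :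
    (∏ k ∈ Finset.Icc j i, (a * q ^ (m : ℤ) - b * q ^ (k : ℤ))) * qp (b / a) q c =
      (a * q ^ (m : ℤ)) ^ ((i : ℤ) - j + 1) * qp (b / a) q d := by
  subst hd hc
  obtain ⟨e, rfl⟩ := Nat.exists_eq_add_of_le hji
  rw [← qp_shift_int (b / a) q hq h ((j : ℤ) - m) (((j + e : ℕ) : ℤ) - m + 1) ((e + 1 : ℕ) : ℤ) (by omega) (by push_cast; ring)]
  rw [qp_nat]
  have e1 : (((j + e : ℕ) : ℤ) - j + 1) = ((e + 1 : ℕ) : ℤ) := by push_cast; ring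
  rw [e1, zpow_natCast (a * q ^ (m : ℤ)), ← mul_assoc]
  congr 1
  have e2 : Finset.Icc j (j + e) = Finset.Ico j (j + e + 1) := by ext; simp only [Finset.mem_Icc, Finset.mem_Ico]; omega
  rw [e2, Finset.prod_Ico_eq_prod_range, show j + e + 1 - j = e + 1 by omega]
  have hm := zpow_ne_zero (m : ℤ) hq
  calc _ = ∏ k ∈ Finset.range (e + 1), ((a * q ^ (m : ℤ)) *
        (1 - b / a * q ^ ((j : ℤ) - m) * q ^ (k : ℤ))) := by
        refine Finset.prod_congr rfl fun k _ => ?_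
        rw [zpow_sub₀ hq, Nat.cast_add, zpow_add₀ hq]
        field_simp
    _ = _ := by rw [Finset.prod_mul_distrib]; simp

lemma pairA (a b q : ℂ) (hq : q ≠ 0) (ha : a ≠ 0) (hb : b ≠ 0) (h : ∀ k : ℤ, a / b * q ^ k ≠ 1)
    (h' : ∀ k : ℤ, b / a * q ^ k ≠ 1) (jr ir js is : ℕ) (hr : jr ≤ ir) (hs : js ≤ is) :
    ∃ K : ℂ, ∀ m n : ℕ, jr ≤ m → m ≤ ir → js ≤ n → n ≤ is →
      (qp (q * (a / b) * q ^ ((m : ℤ) - n)) q ((ir : ℤ) - m))⁻¹ *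
      (qp (q * (b / a) * q ^ ((n : ℤ) - m)) q ((is : ℤ) - n))⁻¹ *
      (qp (q * (a / b) * q ^ ((jr : ℤ) - js)) q ((m : ℤ) - jr))⁻¹ *
      (qp (q * (b / a) * q ^ ((js : ℤ) - jr)) q ((n : ℤ) - js))⁻¹ *
      q ^ (((ir : ℤ) - m) * ((is : ℤ) - n)) =
      K * (b * q ^ (n : ℤ) - a * q ^ (m : ℤ)) *
        (∏ k ∈ Finset.Icc js is, (a * q ^ (m : ℤ) - b * q ^ (k : ℤ)))⁻¹ *
        (∏ k ∈ Finset.Icc jr ir, (b * q ^ (n : ℤ) - a * q ^ (k : ℤ)))⁻¹ := by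
  obtain ⟨u, hu⟩ : ∃ u, u = a / b := ⟨_, rfl⟩
  have hba : b / a = u⁻¹ := by rw [hu, inv_div]
  have hu0 : u ≠ 0 := by rw [hu]; exact div_ne_zero ha hb
  have hu1 : 1 - u ≠ 0 := by
    intro h0; have := h 0; rw [← hu] at this; apply this; rw [zpow_zero, mul_one]; exact (sub_eq_zero.mp h0).symm
  refine ⟨qp u q ((jr : ℤ) - js + 1) * qp u⁻¹ q ((js : ℤ) - jr + 1) *
    (a ^ ((is : ℤ) - js + 1) * b ^ ((ir : ℤ) - jr + 1) * (1 - u)⁻¹ * (-u⁻¹) ^ ((jr : ℤ) - js) *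
      q ^ ((ir : ℤ) * is - bb js - bb (1 - jr))) * b⁻¹, ?_⟩
  intro m n hm1 hm2 hn1 hn2
  have P1 := prod_form a b q hq ha h' m js is hs _ _ rfl rfl
  have P2 := prod_form b a q hq hb h n jr ir hr _ _ rfl rfl
  rw [hba] at h' P1 ⊢
  rw [← hu] at h P2 ⊢
  have sh : ∀ (v : ℂ) (c : ℤ), q * v * q ^ c = v * q ^ (c + 1) := by
    intro v c; rw [zpow_add_one₀ hq]; ring
  simp only [sh]
  have E1 := qp_shift_int u q hq h ((m : ℤ) - n + 1) ((ir : ℤ) - n + 1) ((ir : ℤ) - m) (by omega) (by ring)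
  have E2 := qp_shift_int u⁻¹ q hq h' ((n : ℤ) - m + 1) ((is : ℤ) - m + 1) ((is : ℤ) - n) (by omega) (by ring)
  have E3 := qp_shift_int u q hq h ((jr : ℤ) - js + 1) ((m : ℤ) - js + 1) ((m : ℤ) - jr) (by omega) (by ring)
  have E4 := qp_shift_int u⁻¹ q hq h' ((js : ℤ) - jr + 1) ((n : ℤ) - jr + 1) ((n : ℤ) - js) (by omega) (by ring)
  have E7 := T_rel u q hq hu0 h h' ((js : ℤ) - m) ((m : ℤ) - js + 1) (by ring)
  have E8 := T_rel u q hq hu0 h h' ((n : ℤ) - jr + 1) ((jr : ℤ) - n) (by ring)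
  have E9 := T_rel u q hq hu0 h h' ((n : ℤ) - m + 1) ((m : ℤ) - n) (by ring)
  have E10 := qp_succ_int u q h ((m : ℤ) - n)
  have N := qp_ne_int u q h
  have N' := qp_ne_int u⁻¹ q h'
  have hX : a * q ^ (m : ℤ) ≠ 0 := mul_ne_zero ha (zpow_ne_zero _ hq)
  have hY : b * q ^ (n : ℤ) ≠ 0 := mul_ne_zero hb (zpow_ne_zero _ hq)
  have hu' : (-u⁻¹) ≠ 0 := neg_ne_zero.mpr (inv_ne_zero hu0)
  -- the monomial identity
  have mono : (a * q ^ (m : ℤ)) ^ ((is : ℤ) - js + 1) * (b * q ^ (n : ℤ)) ^ ((ir : ℤ) - jr + 1) *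
      ((1 - u) * (-u⁻¹) ^ ((n : ℤ) - m + 1) * q ^ bb ((n : ℤ) - m + 1)) *
      q ^ (((ir : ℤ) - m) * ((is : ℤ) - n)) =
      (a ^ ((is : ℤ) - js + 1) * b ^ ((ir : ℤ) - jr + 1) * (1 - u)⁻¹ * (-u⁻¹) ^ ((jr : ℤ) - js) *
        q ^ ((ir : ℤ) * is - bb js - bb (1 - jr))) * q ^ (n : ℤ) *
      (((1 - u) * (-u⁻¹) ^ ((js : ℤ) - m) * q ^ bb ((js : ℤ) - m)) *
      ((1 - u) * (-u⁻¹) ^ ((n : ℤ) - jr + 1) * q ^ bb ((n : ℤ) - jr + 1))) := by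
    have q1 : q ^ ((m : ℤ) * ((is : ℤ) - js + 1)) * q ^ ((n : ℤ) * ((ir : ℤ) - jr + 1)) *
        q ^ bb ((n : ℤ) - m + 1) * q ^ (((ir : ℤ) - m) * ((is : ℤ) - n)) =
        q ^ ((ir : ℤ) * is - bb js - bb (1 - jr)) * q ^ (n : ℤ) * q ^ bb ((js : ℤ) - m) *
          q ^ bb ((n : ℤ) - jr + 1) := by
      simp only [← zpow_add₀ hq]
      congr 1
      have b1 := two_bb ((n : ℤ) - m + 1)
      have b2 := two_bb js
      have b3 := two_bb (1 - jr)
      have b4 := two_bb ((js : ℤ) - m)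
      have b5 := two_bb ((n : ℤ) - jr + 1)
      linarith
    have q2 : (-u⁻¹) ^ ((n : ℤ) - m + 1) =
        (-u⁻¹) ^ ((jr : ℤ) - js) * (-u⁻¹) ^ ((js : ℤ) - m) * (-u⁻¹) ^ ((n : ℤ) - jr + 1) := by
      simp only [← zpow_add₀ hu']
      congr 1; ring
    simp only [mul_zpow, ← zpow_mul]
    rw [q2]
    have q3 : (1 - u)⁻¹ * (1 - u) = 1 := inv_mul_cancel₀ hu1
    linear_combination (a ^ ((is : ℤ) - js + 1) * b ^ ((ir : ℤ) - jr + 1) * (1 - u) *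
      ((-u⁻¹) ^ ((jr : ℤ) - js) * (-u⁻¹) ^ ((js : ℤ) - m) * (-u⁻¹) ^ ((n : ℤ) - jr + 1))) * q1 -
      (a ^ ((is : ℤ) - js + 1) * b ^ ((ir : ℤ) - jr + 1) * (1 - u) *
      ((-u⁻¹) ^ ((jr : ℤ) - js) * (-u⁻¹) ^ ((js : ℤ) - m) * (-u⁻¹) ^ ((n : ℤ) - jr + 1)) *
      (q ^ ((ir : ℤ) * is - bb js - bb (1 - jr)) * q ^ (n : ℤ) * q ^ bb ((js : ℤ) - m) *
          q ^ bb ((n : ℤ) - jr + 1))) * q3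
  rw [← E7, ← E8, ← E9] at mono
  have hXY : b * q ^ (n : ℤ) - a * q ^ (m : ℤ) = b * q ^ (n : ℤ) * (1 - u * q ^ ((m : ℤ) - n)) := by
    rw [zpow_sub₀ hq, hu]
    have := zpow_ne_zero (n : ℤ) hq
    field_simp
  have hw : 1 - u * q ^ ((m : ℤ) - n) ≠ 0 := fun h0 => h _ (sub_eq_zero.mp h0).symm
  rw [hXY]
  rw [eq_div_of_mul_eq (N _) E1, eq_div_of_mul_eq (N' _) E2, eq_div_of_mul_eq (N _) E3,
    eq_div_of_mul_eq (N' _) E4, eq_div_of_mul_eq (N' _) P1, eq_div_of_mul_eq (N _) P2, E10]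
  generalize a ^ ((is : ℤ) - js + 1) * b ^ ((ir : ℤ) - jr + 1) * (1 - u)⁻¹ * (-u⁻¹) ^ ((jr : ℤ) - js) *
        q ^ ((ir : ℤ) * is - bb js - bb (1 - jr)) = K0 at mono ⊢
  have z1 := zpow_ne_zero ((is : ℤ) - js + 1) hX
  have z2 := zpow_ne_zero ((ir : ℤ) - jr + 1) hY
  generalize (a * q ^ (m : ℤ)) ^ ((is : ℤ) - js + 1) = A1 at mono z1 ⊢
  generalize (b * q ^ (n : ℤ)) ^ ((ir : ℤ) - jr + 1) = A2 at mono z2 ⊢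
  generalize 1 - u * q ^ ((m : ℤ) - n) = A3 at hw ⊢
  generalize q ^ (((ir : ℤ) - m) * ((is : ℤ) - n)) = A4 at mono ⊢
  generalize q ^ (n : ℤ) = A5 at mono ⊢
  have n1 := N ((ir : ℤ) - n + 1)
  have n2 := N ((m : ℤ) - n)
  have n3 := N' ((n : ℤ) - m + 1)
  have n4 := N' ((is : ℤ) - m + 1)
  have n5 := N ((jr : ℤ) - js + 1)
  have n6 := N ((m : ℤ) - js + 1)
  have n7 := N' ((js : ℤ) - jr + 1)
  have n8 := N' ((n : ℤ) - jr + 1)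
  have n9 := N' ((js : ℤ) - m)
  have n10 := N ((jr : ℤ) - n)
  generalize qp u q ((ir : ℤ) - n + 1) = B1 at *
  generalize qp u q ((m : ℤ) - n) = B2 at *
  generalize qp u⁻¹ q ((n : ℤ) - m + 1) = B3 at *
  generalize qp u⁻¹ q ((is : ℤ) - m + 1) = B4 at *
  generalize qp u q ((jr : ℤ) - js + 1) = B5 at *
  generalize qp u q ((m : ℤ) - js + 1) = B6 at *
  generalize qp u⁻¹ q ((js : ℤ) - jr + 1) = B7 at *
  generalize qp u⁻¹ q ((n : ℤ) - jr + 1) = B8 at *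
  generalize qp u⁻¹ q ((js : ℤ) - m) = B9 at *
  generalize qp u q ((jr : ℤ) - n) = B10 at *
  clear E1 E2 E3 E4 E7 E8 E9 E10 P1 P2 N N' hXY
  field_simp
  linear_combination mono

lemma prod_Ioo_qp (a b q : ℂ) (hq : q ≠ 0) (m j i : ℕ) (hji : j < i) (c' : ℂ) (e : ℤ)
    (hc' : c' * q ^ e = a * b * q) (d1 d2 : ℤ) (h1 : d1 = m + j + e) (h2 : d2 = m + i + e - 1)
    (hd : 0 ≤ d1) :
    (∏ k ∈ Finset.Ioo j i, (1 - a * q ^ (m : ℤ) * (b * q ^ (k : ℤ)))) * qp c' q d1 = qp c' q d2 := by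
  obtain ⟨f, rfl⟩ := Nat.exists_eq_add_of_lt hji
  rw [← qp_shift_nat c' q hq d1 d2 (f : ℤ) hd (by omega) (by subst h1 h2; push_cast; ring), qp_nat]
  congr 1
  have e2 : Finset.Ioo j (j + f + 1) = Finset.Ico (j + 1) (j + 1 + f) := by
    ext; simp only [Finset.mem_Ioo, Finset.mem_Ico]; omega
  rw [e2, Finset.prod_Ico_eq_prod_range, show j + 1 + f - (j + 1) = f by omega]
  refine Finset.prod_congr rfl fun k _ => ?_
  subst h1
  push_cast
  simp only [zpow_add₀ hq, zpow_one]
  linear_combination (q ^ (m : ℤ) * q ^ (j : ℤ) * q ^ (k : ℤ)) * hc'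

lemma HH_qp (a b q : ℂ) (hq : q ≠ 0) (h : ∀ k : ℕ, a * b * q ^ (k : ℤ) ≠ 1) (m j i : ℕ) (hji : j ≤ i) :
    (if j < i then ∏ k ∈ Finset.Ioo j i, (1 - a * q ^ (m : ℤ) * (b * q ^ (k : ℤ)))
      else (1 - a * q ^ (m : ℤ) * (b * q ^ (j : ℤ)))⁻¹) =
    qp (a * b) q ((m + i : ℕ) : ℤ) / qp (a * b) q ((m + j + 1 : ℕ) : ℤ) := by
  apply eq_div_of_mul_eq (qp_ne_nat _ _ h _)
  split_ifs with hlt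
  · exact prod_Ioo_qp a b q hq m j i hlt (a * b) 1 (by simp) _ _ (by push_cast; ring)
      (by push_cast; ring) (by omega)
  · obtain rfl : i = j := by omega
    have e : ((m + i + 1 : ℕ) : ℤ) = ((m + i : ℕ) : ℤ) + 1 := by push_cast; ring
    have hne : 1 - a * b * q ^ ((m + i : ℕ) : ℤ) ≠ 0 := fun h0 => h _ (sub_eq_zero.mp h0).symm
    have e3 : 1 - a * q ^ (m : ℤ) * (b * q ^ (i : ℤ)) = 1 - a * b * q ^ ((m + i : ℕ) : ℤ) := by
      push_cast; rw [zpow_add₀ hq]; ring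
    rw [e, qp_succ_nat, e3]
    field_simp

lemma pairC (a b q : ℂ) (hq : q ≠ 0) (h : ∀ k : ℕ, a * b * q ^ (k : ℤ) ≠ 1)
    (jr ir js is : ℕ) (hr : jr ≤ ir) (hs : js ≤ is) :
    ∃ K : ℂ, ∀ m n : ℕ, jr ≤ m → m ≤ ir → js ≤ n → n ≤ is →
      (qp (a * b * q ^ ((m : ℤ) + is)) q ((ir : ℤ) - m))⁻¹ *
      (qp (b * a * q ^ ((n : ℤ) + ir)) q ((is : ℤ) - n))⁻¹ *
      (qp (q * (a * b) * q ^ ((jr : ℤ) + js)) q ((m : ℤ) - jr))⁻¹ *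
      (qp (q * (b * a) * q ^ ((js : ℤ) + jr)) q ((n : ℤ) - js))⁻¹ *
      ((1 - a * b * q ^ ((m : ℤ) + n)) / (1 - a * b * q ^ ((ir : ℤ) + is))) =
      K * (1 - a * q ^ (m : ℤ) * (b * q ^ (n : ℤ))) *
      (if js < is then ∏ k ∈ Finset.Ioo js is, (1 - a * q ^ (m : ℤ) * (b * q ^ (k : ℤ)))
        else (1 - a * q ^ (m : ℤ) * (b * q ^ (js : ℤ)))⁻¹) *
      (if jr < ir then ∏ k ∈ Finset.Ioo jr ir, (1 - b * q ^ (n : ℤ) * (a * q ^ (k : ℤ)))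
        else (1 - b * q ^ (n : ℤ) * (a * q ^ (jr : ℤ)))⁻¹) := by
  refine ⟨(qp (a * b) q ((ir + is : ℕ) : ℤ))⁻¹ * (qp (a * b) q ((ir + is : ℕ) : ℤ))⁻¹ *
    qp (a * b) q ((jr + js + 1 : ℕ) : ℤ) * qp (a * b) q ((jr + js + 1 : ℕ) : ℤ) *
    (1 - a * b * q ^ ((ir : ℤ) + is))⁻¹, ?_⟩
  intro m n hm1 hm2 hn1 hn2
  rw [HH_qp a b q hq h m js is hs, HH_qp b a q hq (by simpa [mul_comm b a] using h) n jr ir hr]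
  have sh : ∀ (v : ℂ) (c : ℤ), q * v * q ^ c = v * q ^ (c + 1) := by
    intro v c; rw [zpow_add_one₀ hq]; ring
  simp only [sh, mul_comm b a]
  have N := qp_ne_nat _ _ h
  have E1 := qp_shift_nat (a * b) q hq ((m : ℤ) + is) ((ir + is : ℕ) : ℤ) ((ir : ℤ) - m) (by omega)
    (by omega) (by push_cast; ring)
  have E2 := qp_shift_nat (a * b) q hq ((n : ℤ) + ir) ((ir + is : ℕ) : ℤ) ((is : ℤ) - n) (by omega)
    (by omega) (by push_cast; ring)
  have E3 := qp_shift_nat (a * b) q hq ((jr : ℤ) + js + 1) ((m + js + 1 : ℕ) : ℤ) ((m : ℤ) - jr) (by omega)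
    (by omega) (by push_cast; ring)
  have E4 := qp_shift_nat (a * b) q hq ((js : ℤ) + jr + 1) ((n + jr + 1 : ℕ) : ℤ) ((n : ℤ) - js) (by omega)
    (by omega) (by push_cast; ring)
  have c1 : (m : ℤ) + is = ((m + is : ℕ) : ℤ) := by push_cast; ring
  have c2 : (n : ℤ) + ir = ((n + ir : ℕ) : ℤ) := by push_cast; ring
  have c3 : (jr : ℤ) + js + 1 = ((jr + js + 1 : ℕ) : ℤ) := by push_cast; ring
  have c4 : (js : ℤ) + jr + 1 = ((jr + js + 1 : ℕ) : ℤ) := by push_cast; ring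
  rw [c1] at E1 ⊢
  rw [c2] at E2 ⊢
  rw [c3] at E3 ⊢
  rw [c4] at E4 ⊢
  rw [eq_div_of_mul_eq (N _) E1, eq_div_of_mul_eq (N _) E2, eq_div_of_mul_eq (N _) E3,
    eq_div_of_mul_eq (N _) E4]
  have e3 : 1 - a * q ^ (m : ℤ) * (b * q ^ (n : ℤ)) = 1 - a * b * q ^ ((m : ℤ) + n) := by
    rw [zpow_add₀ hq]; ring
  rw [e3]
  simp only [div_eq_mul_inv, mul_inv, inv_inv]
  ring

lemma prod_diag (x q : ℂ) (hq : q ≠ 0) (j i m : ℕ) (h1 : j ≤ m) (h2 : m ≤ i) :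
    ∏ k ∈ (Finset.Icc j i).erase m, (x * q ^ (m : ℤ) - x * q ^ (k : ℤ)) =
    (-x) ^ (m - j) * q ^ (bb m - bb j) * qp q q ((m : ℤ) - j) *
     ((x * q ^ (m : ℤ)) ^ (i - m) * qp q q ((i : ℤ) - m)) := by
  have e : (Finset.Icc j i).erase m = Finset.Ico j m ∪ Finset.Ico (m + 1) (i + 1) := by
    ext; simp only [Finset.mem_erase, Finset.mem_Icc, Finset.mem_union, Finset.mem_Ico]; omega
  rw [e, Finset.prod_union (by
    rw [Finset.disjoint_left]; intro k; simp only [Finset.mem_Ico]; omega)]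
  congr 1
  · obtain ⟨d, rfl⟩ := Nat.exists_eq_add_of_le h1
    rw [Finset.prod_Ico_eq_prod_range, Nat.add_sub_cancel_left,
      show ((j + d : ℕ) : ℤ) - j = (d : ℤ) by push_cast; ring, qp_nat,
      ← Finset.prod_range_reflect]
    have hb : ∀ d : ℕ, q ^ (bb ((j + d : ℕ) : ℤ) - bb j) = ∏ k ∈ Finset.range d, q ^ ((j + k : ℕ) : ℤ) := by
      intro d
      induction d with
      | zero => simp
      | succ d ih =>
        rw [Finset.prod_range_succ, ← ih, ← zpow_add₀ hq]
        congr 1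
        have b1 := two_bb ((j + (d + 1) : ℕ) : ℤ)
        have b2 := two_bb ((j + d : ℕ) : ℤ)
        push_cast at *
        linarith
    rw [hb d, ← Finset.prod_range_reflect (fun k => q ^ ((j + k : ℕ) : ℤ))]
    have : (-x) ^ d = ∏ k ∈ Finset.range d, (-x) := by simp
    rw [this, ← Finset.prod_mul_distrib, ← Finset.prod_mul_distrib]
    refine Finset.prod_congr rfl fun k hk => ?_
    rw [Finset.mem_range] at hk
    have e5 : ((j + d : ℕ) : ℤ) = ((j + (d - 1 - k) : ℕ) : ℤ) + 1 + k := by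
      push_cast; omega
    rw [e5, zpow_add₀ hq, zpow_add_one₀ hq]
    ring
  · obtain ⟨d, rfl⟩ := Nat.exists_eq_add_of_le h2
    rw [Finset.prod_Ico_eq_prod_range, Nat.add_sub_cancel_left,
      show ((m + d : ℕ) : ℤ) - m = (d : ℤ) by push_cast; ring, qp_nat,
      show m + d + 1 - (m + 1) = d by omega]
    have : (x * q ^ (m : ℤ)) ^ d = ∏ k ∈ Finset.range d, (x * q ^ (m : ℤ)) := by simp
    rw [this, ← Finset.prod_mul_distrib]
    refine Finset.prod_congr rfl fun k hk => ?_
    push_cast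
    rw [zpow_add₀ hq, zpow_add_one₀ hq]
    ring

lemma diag (x q : ℂ) (hq : q ≠ 0) (hx : x ≠ 0) (hq1 : ∀ k : ℕ, q * q ^ (k : ℤ) ≠ 1)
    (h : ∀ k : ℕ, x * x * q * q ^ (k : ℤ) ≠ 1) (j i : ℕ) (hji : j ≤ i) :
    ∃ K : ℂ, ∀ m : ℕ, j ≤ m → m ≤ i →
      (qp (q * (x / x) * q ^ ((m : ℤ) - m)) q ((i : ℤ) - m))⁻¹ *
      (qp (x * x * q ^ ((m : ℤ) + i)) q ((i : ℤ) - m))⁻¹ *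
      (qp (q * (x / x) * q ^ ((j : ℤ) - j)) q ((m : ℤ) - j))⁻¹ *
      (qp (q * (x * x) * q ^ ((j : ℤ) + j)) q ((m : ℤ) - j))⁻¹ *
      ((-1) ^ ((i : ℤ) - m) * q ^ bb ((i : ℤ) - m)) =
      K * ((if j < i then ∏ k ∈ Finset.Ioo j i, (1 - x * q ^ (m : ℤ) * (x * q ^ (k : ℤ)))
        else 1) *
      (∏ k ∈ (Finset.Icc j i).erase m, (x * q ^ (m : ℤ) - x * q ^ (k : ℤ)))⁻¹) := by
  rcases hji.eq_or_lt with rfl | hlt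
  · refine ⟨1, fun m h1 h2 => ?_⟩
    obtain rfl : m = j := le_antisymm h2 h1
    simp [qp_zero', bb]
  simp only [if_pos hlt, sub_self, div_self hx, mul_one, zpow_zero]
  refine ⟨(qp (x * x * q) q ((2 * i - 1 : ℕ) : ℤ))⁻¹ * qp (x * x * q) q ((2 * j : ℕ) : ℤ) *
    ((-1) ^ i * (-1) ^ j * q ^ (bb i - bb j) * x ^ (i - j)) , fun m h1 h2 => ?_⟩
  have N := qp_ne_nat _ _ h
  have Nq := qp_ne_nat _ _ hq1
  rw [prod_diag x q hq j i m h1 h2]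
  have H := prod_Ioo_qp x x q hq m j i hlt (x * x * q) 0 (by simp) ((m + j : ℕ) : ℤ)
    ((m + i - 1 : ℕ) : ℤ) (by push_cast; ring) (by omega) (by omega)
  rw [eq_div_of_mul_eq (N _) H]
  have E1 := qp_shift_nat (x * x * q) q hq ((m + i - 1 : ℕ) : ℤ) ((2 * i - 1 : ℕ) : ℤ) ((i : ℤ) - m)
    (by omega) (by omega) (by omega)
  have E2 := qp_shift_nat (x * x * q) q hq ((2 * j : ℕ) : ℤ) ((m + j : ℕ) : ℤ) ((m : ℤ) - j)
    (by omega) (by omega) (by omega)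
  have c1 : x * x * q ^ ((m : ℤ) + i) = x * x * q * q ^ ((m + i - 1 : ℕ) : ℤ) := by
    have : (m : ℤ) + i = ((m + i - 1 : ℕ) : ℤ) + 1 := by omega
    rw [this, zpow_add_one₀ hq]; ring
  have c2 : q * (x * x) * q ^ ((j : ℤ) + j) = x * x * q * q ^ ((2 * j : ℕ) : ℤ) := by
    have : (j : ℤ) + j = ((2 * j : ℕ) : ℤ) := by omega
    rw [this]; ring
  rw [c1, c2, eq_div_of_mul_eq (N _) E1, eq_div_of_mul_eq (N _) E2]
  have n1 : qp q q ((i : ℤ) - m) ≠ 0 := by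
    rw [show (i : ℤ) - m = ((i - m : ℕ) : ℤ) by omega]; exact Nq _
  have n2 : qp q q ((m : ℤ) - j) ≠ 0 := by
    rw [show (m : ℤ) - j = ((m - j : ℕ) : ℤ) by omega]; exact Nq _
  have mono : (-1 : ℂ) ^ ((i : ℤ) - m) * q ^ bb ((i : ℤ) - m) *
      ((-x) ^ (m - j) * q ^ (bb m - bb j) * (x * q ^ (m : ℤ)) ^ (i - m)) =
      (-1) ^ i * (-1) ^ j * q ^ (bb i - bb j) * x ^ (i - j) := by
    obtain ⟨d, rfl⟩ := Nat.exists_eq_add_of_le h1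
    obtain ⟨e, rfl⟩ := Nat.exists_eq_add_of_le h2
    rw [show ((j + d + e : ℕ) : ℤ) - ((j + d : ℕ) : ℤ) = (e : ℤ) by push_cast; ring,
      show j + d - j = d by omega, show j + d + e - (j + d) = e by omega,
      show j + d + e - j = d + e by omega]
    have q1 : q ^ bb (e : ℤ) * q ^ (bb ((j + d : ℕ) : ℤ) - bb j) * q ^ (((j + d : ℕ) : ℤ) * e) =
        q ^ (bb ((j + d + e : ℕ) : ℤ) - bb j) := by
      simp only [← zpow_add₀ hq]
      congr 1
      have b1 := two_bb e
      have b2 := two_bb ((j + d : ℕ) : ℤ)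
      have b3 := two_bb ((j + d + e : ℕ) : ℤ)
      push_cast at *
      linarith
    rw [← q1, mul_pow, neg_pow x d, zpow_natCast (-1 : ℂ), ← zpow_natCast (q ^ ((j + d : ℕ) : ℤ)) e, ← zpow_mul]
    have s1 : (-1 : ℂ) ^ (j + d + e) * (-1) ^ j = (-1) ^ e * (-1) ^ d := by
      have : ((-1 : ℂ) ^ j) * (-1) ^ j = 1 := by rw [← mul_pow]; simp
      rw [pow_add, pow_add]
      linear_combination ((-1 : ℂ) ^ d * (-1) ^ e) * this
    rw [s1, pow_add]
    ring
  rw [← mono]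
  have m1 : ((-x) ^ (m - j) * q ^ (bb m - bb j) * (x * q ^ (m : ℤ)) ^ (i - m)) ≠ 0 :=
    mul_ne_zero (mul_ne_zero (pow_ne_zero _ (neg_ne_zero.mpr hx)) (zpow_ne_zero _ hq))
      (pow_ne_zero _ (mul_ne_zero hx (zpow_ne_zero _ hq)))
  rw [show (-x) ^ (m - j) * q ^ (bb m - bb j) * qp q q ((m : ℤ) - j) *
     ((x * q ^ (m : ℤ)) ^ (i - m) * qp q q ((i : ℤ) - m)) =
     ((-x) ^ (m - j) * q ^ (bb m - bb j) * (x * q ^ (m : ℤ)) ^ (i - m)) * (qp q q ((m : ℤ) - j) *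
       qp q q ((i : ℤ) - m)) by ring]
  generalize ((-x) ^ (m - j) * q ^ (bb m - bb j) * (x * q ^ (m : ℤ)) ^ (i - m)) = A at *
  have n3 := N (2 * i - 1)
  have n4 := N (2 * j)
  have n5 := N (m + i - 1)
  have n6 := N (m + j)
  field_simp

lemma prod_split {ℓ : ℕ} (f : Fin ℓ → Fin ℓ → ℂ) :
    ∏ r, ∏ s, f r s = (∏ r, f r r) * ∏ r, ∏ s, if r < s then f r s * f s r else 1 := by
  have h1 : ∀ r s, f r s = (if r = s then f r s else 1) * ((if r < s then f r s else 1) *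
      (if s < r then f r s else 1)) := by
    intro r s
    rcases lt_trichotomy r s with h | h | h
    · simp [h, h.ne, h.not_gt]
    · simp [h]
    · simp [h, h.ne', h.not_gt]
  have h2 : ∀ r s, (if r < s then f r s * f s r else 1) =
      (if r < s then f r s else 1) * (if r < s then f s r else 1) := by
    intro r s; split_ifs <;> simp
  rw [Finset.prod_congr rfl fun r _ => Finset.prod_congr rfl fun s _ => h1 r s]
  simp only [h2, Finset.prod_mul_distrib]
  rw [Finset.prod_comm (f := fun r s => if s < r then f r s else 1)]
  simp

lemma sum_split {ℓ : ℕ} (m : Fin ℓ → ℤ) :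
    bb (∑ r, m r) = (∑ r, bb (m r)) + ∑ r, ∑ s, if r < s then m r * m s else 0 := by
  have h1 : ∀ r s, m r * m s = (if r = s then m r * m s else 0) + ((if r < s then m r * m s else 0) +
      (if s < r then m s * m r else 0)) := by
    intro r s
    rcases lt_trichotomy r s with h | h | h
    · simp [h, h.ne, h.not_gt]
    · simp [h]
    · simp [h, h.ne', h.not_gt, mul_comm]
  have h2 : (∑ r, m r) * (∑ r, m r) = (∑ r, m r * m r) + 2 * ∑ r, ∑ s, if r < s then m r * m s else 0 := by
    rw [Finset.sum_mul_sum]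
    rw [Finset.sum_congr rfl fun r _ => Finset.sum_congr rfl fun s _ => h1 r s]
    simp only [Finset.sum_add_distrib]
    rw [Finset.sum_comm (f := fun r s => if s < r then m s * m r else 0)]
    simp
    ring
  have h3 : 2 * bb (∑ r, m r) = 2 * ((∑ r, bb (m r)) + ∑ r, ∑ s, if r < s then m r * m s else 0) := by
    rw [two_bb, mul_sub, h2, mul_one, mul_add, Finset.mul_sum (s := Finset.univ) (f := fun r => bb (m r))]
    simp only [two_bb, mul_sub, mul_one, Finset.sum_sub_distrib]
    ring
  linarith

lemma zpow_sum' {ι : Type*} (q : ℂ) (hq : q ≠ 0) (s : Finset ι) (m : ι → ℤ) :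
    q ^ (∑ r ∈ s, m r) = ∏ r ∈ s, q ^ m r := by
  classical
  induction s using Finset.induction_on with
  | empty => simp
  | insert a s ha ih => rw [Finset.sum_insert ha, Finset.prod_insert ha, zpow_add₀ hq, ih]

lemma det_sum {ℓ : ℕ} (i j : Fin ℓ → ℕ) (w z : Fin ℓ → ℕ → ℂ) :
    Matrix.det (fun r (k : Fin ℓ) => ∑ t ∈ Finset.Icc (j r) (i r), w r t * z r t ^ (k : ℕ)) =
    ∑ y ∈ Finset.Icc j i, (∏ r, w r (y r)) * ∏ r, ∏ s, if r < s then z s (y s) - z r (y r) else 1 := by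
  have h := (Matrix.detRowAlternating (n := Fin ℓ) (R := ℂ)).toMultilinearMap.map_sum_finset
    (fun r t => fun k : Fin ℓ => w r t * z r t ^ (k : ℕ)) (fun r => Finset.Icc (j r) (i r))
  have e : Fintype.piFinset (fun r => Finset.Icc (j r) (i r)) = Finset.Icc j i := by
    ext y; simp [Finset.mem_Icc, Pi.le_def, forall_and]
  rw [e] at h
  have e1 : (fun r (k : Fin ℓ) => ∑ t ∈ Finset.Icc (j r) (i r), w r t * z r t ^ (k : ℕ)) =
      (fun r => ∑ t ∈ Finset.Icc (j r) (i r), fun k : Fin ℓ => w r t * z r t ^ (k : ℕ)) := by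
    funext r k; simp
  rw [e1]
  refine Eq.trans h (Finset.sum_congr rfl fun y _ => ?_)
  have h3 := Matrix.det_mul_column (fun r => w r (y r)) (Matrix.vandermonde fun r => z r (y r))
  rw [Matrix.det_vandermonde] at h3
  refine Eq.trans h3 ?_
  congr 1
  refine Finset.prod_congr rfl fun r _ => ?_
  rw [Finset.prod_ite]
  simp
  refine Finset.prod_congr ?_ fun _ _ => rfl
  ext; simp

lemma term_eq {ℓ : ℕ} (q : ℂ) (hq : q ≠ 0) (x : Fin ℓ → ℂ) (hx : ∀ k, x k ≠ 0)
    (hq1 : ∀ k : ℕ, q * q ^ (k : ℤ) ≠ 1)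
    (hA : ∀ r s, r ≠ s → ∀ k : ℤ, x r / x s * q ^ k ≠ 1)
    (hC : ∀ r s, r ≠ s → ∀ k : ℕ, x r * x s * q ^ (k : ℤ) ≠ 1)
    (hD : ∀ r, ∀ k : ℕ, x r * x r * q * q ^ (k : ℤ) ≠ 1)
    (i j : Fin ℓ → ℕ) (hji : ∀ k, j k ≤ i k) (P : Fin ℓ → ℕ → ℂ)
    (hP : P = fun (r : Fin ℓ) (t : ℕ) => x r * q ^ (t : ℤ)) :
    ∃ K : ℂ, ∀ y ∈ Finset.Icc j i, MCstar ℓ q x i y * MC ℓ q x y j =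
      K * ((∏ r, ∏ s, WW P i j r s (y r)) * ∏ r, ∏ s, if r < s then
        (P s (y s) + (P s (y s))⁻¹) - (P r (y r) + (P r (y r))⁻¹) else 1) := by
  choose Kd hKd using fun r => diag (x r) q hq (hx r) hq1 (hD r) (j r) (i r) (hji r)
  choose KA hKA using fun (rs : {rs : Fin ℓ × Fin ℓ // rs.1 ≠ rs.2}) =>
    pairA (x rs.1.1) (x rs.1.2) q hq (hx _) (hx _) (hA _ _ rs.2) (hA _ _ rs.2.symm)
      (j rs.1.1) (i rs.1.1) (j rs.1.2) (i rs.1.2) (hji _) (hji _)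
  choose KC hKC using fun (rs : {rs : Fin ℓ × Fin ℓ // rs.1 ≠ rs.2}) =>
    pairC (x rs.1.1) (x rs.1.2) q hq (hC _ _ rs.2)
      (j rs.1.1) (i rs.1.1) (j rs.1.2) (i rs.1.2) (hji _) (hji _)
  refine ⟨(∏ r, Kd r) * ∏ r, ∏ s, if h : r < s then
    -(KA ⟨(r, s), h.ne⟩ * KC ⟨(r, s), h.ne⟩) else 1, ?_⟩
  intro y hy
  rw [Finset.mem_Icc] at hy
  have hy1 : ∀ r, j r ≤ y r := hy.1
  have hy2 : ∀ r, y r ≤ i r := hy.2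
  have es : (∑ s, (i s : ℤ)) - ∑ s, (y s : ℤ) = ∑ s, ((i s : ℤ) - y s) := by
    rw [Finset.sum_sub_distrib]
  have eb : ((∑ s, (i s : ℤ)) - ∑ s, (y s : ℤ)) *
        ((∑ s, (i s : ℤ)) - (∑ s, (y s : ℤ)) - 1) / 2 = bb (∑ s, ((i s : ℤ) - y s)) := by
    rw [es]; rfl
  rw [MCstar, MC, eb, es, sum_split, zpow_add₀ hq, zpow_sum' (-1) (by norm_num), zpow_sum' q hq, zpow_sum' q hq]
  simp only [zpow_sum' q hq]
  rw [prod_split (fun r s =>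
      (qp (q * (x r / x s) * q ^ ((y r : ℤ) - (y s : ℤ))) q ((i r : ℤ) - (y r : ℤ)))⁻¹ *
      (qp ((x r * x s) * q ^ ((y r : ℤ) + (i s : ℤ))) q ((i r : ℤ) - (y r : ℤ)))⁻¹),
    prod_split (fun r s =>
      (qp (q * (x r / x s) * q ^ ((j r : ℤ) - (j s : ℤ))) q ((y r : ℤ) - (j r : ℤ)))⁻¹ *
      (qp (q * (x r * x s) * q ^ ((j r : ℤ) + (j s : ℤ))) q ((y r : ℤ) - (j r : ℤ)))⁻¹),
    prod_split (fun r s => WW P i j r s (y r))]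
  -- gather
  have gather : ∀ (a1 b1 c1 d1 e1 f1 g1 h1 : ℂ), (a1 * b1) * c1 * d1 * (e1 * f1) * (g1 * h1) =
    (a1 * g1 * (d1 * e1)) * (b1 * h1 * c1 * f1) := by intros; ring
  have gather2 : ∀ (a1 b1 c1 d1 e1 : ℂ), a1 * b1 * (c1 * d1 * e1) = (a1 * c1) * (b1 * d1 * e1) := by
    intros; ring
  refine Eq.trans (gather _ _ _ _ _ _ _ _) (Eq.trans ?_ (gather2 _ _ _ _ _).symm)
  refine congrArg₂ (· * ·) ?_ ?_
  · simp only [← Finset.prod_mul_distrib]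
    refine Finset.prod_congr rfl fun r _ => ?_
    have h := hKd r (y r) (hy1 r) (hy2 r)
    rw [WW, if_pos rfl, HH, hP]
    simp only [if_true]
    rw [← h]
    ring
  · simp only [← Finset.prod_mul_distrib]
    refine Finset.prod_congr rfl fun r _ => Finset.prod_congr rfl fun s _ => ?_
    by_cases hrs : r < s
    · simp only [if_pos hrs, dif_pos hrs]
      have h1 := hKA ⟨(r, s), hrs.ne⟩ (y r) (y s) (hy1 r) (hy2 r) (hy1 s) (hy2 s)
      have h2 := hKC ⟨(r, s), hrs.ne⟩ (y r) (y s) (hy1 r) (hy2 r) (hy1 s) (hy2 s)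
      rw [WW, if_neg hrs.ne, WW, if_neg hrs.ne', HH, HH, hP]
      simp only [if_neg hrs.ne, if_neg hrs.ne']
      have hX : x r * q ^ (y r : ℤ) ≠ 0 := mul_ne_zero (hx r) (zpow_ne_zero _ hq)
      have hY : x s * q ^ (y s : ℤ) ≠ 0 := mul_ne_zero (hx s) (zpow_ne_zero _ hq)
      have hv : (x r * q ^ (y r : ℤ)) * (x s * q ^ (y s : ℤ)) *
          ((x s * q ^ (y s : ℤ) + (x s * q ^ (y s : ℤ))⁻¹) - (x r * q ^ (y r : ℤ) + (x r * q ^ (y r : ℤ))⁻¹)) =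
          -((x s * q ^ (y s : ℤ) - x r * q ^ (y r : ℤ)) * (1 - x r * q ^ (y r : ℤ) * (x s * q ^ (y s : ℤ)))) := by
        generalize x r * q ^ (y r : ℤ) = A at *
        generalize x s * q ^ (y s : ℤ) = B at *
        field_simp
        ring
      have h3 := congrArg₂ (· * ·) h1 h2
      simp only at h3
      refine Eq.trans (Eq.trans ?_ h3) ?_
      · ring
      · generalize (if j s < i s then _ else _ : ℂ) = Q1
        generalize (if j r < i r then _ else _ : ℂ) = Q2
        generalize (∏ k ∈ Finset.Icc (j s) (i s), _ : ℂ)⁻¹ = Q3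
        generalize (∏ k ∈ Finset.Icc (j r) (i r), _ : ℂ)⁻¹ = Q4
        linear_combination (KA ⟨(r, s), hrs.ne⟩ * KC ⟨(r, s), hrs.ne⟩ * Q1 * Q2 * Q3 * Q4) * hv
    · simp [hrs]

/-- **C_ℓ Bailey Transform, second orthogonality relation.**
For generic parameters, `∑_{j ≤ y ≤ i} M*(i;y) M(y;j) = ∏_k δ(i_k, j_k)`. -/
theorem Cl_bailey_transform_second (ℓ : ℕ) (hℓ : 1 ≤ ℓ) (q : ℂ)
    (hq : q ≠ 0) (x : Fin ℓ → ℂ) (hx : ∀ k, x k ≠ 0)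
    (hd1 : ∀ i j : Fin ℓ → ℕ, (∀ k, j k ≤ i k) → ∀ r s : Fin ℓ,
      qp (q * (x r / x s) * q ^ ((j r : ℤ) - (j s : ℤ))) q ((i r : ℤ) - (j r : ℤ)) ≠ 0)
    (hd2 : ∀ i j : Fin ℓ → ℕ, (∀ k, j k ≤ i k) → ∀ r s : Fin ℓ,
      qp (q * (x r * x s) * q ^ ((j r : ℤ) + (j s : ℤ))) q ((i r : ℤ) - (j r : ℤ)) ≠ 0)
    (hd3 : ∀ i j : Fin ℓ → ℕ, (∀ k, j k ≤ i k) → ∀ r s : Fin ℓ,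
      qp ((x r * x s) * q ^ ((j r : ℤ) + (i s : ℤ))) q ((i r : ℤ) - (j r : ℤ)) ≠ 0)
    (hd4 : ∀ (i : Fin ℓ → ℕ) (r s : Fin ℓ), r < s →
      (1 : ℂ) - x r * x s * q ^ ((i r : ℤ) + (i s : ℤ)) ≠ 0) :
    ∀ i j : Fin ℓ → ℕ,
      ∑ y ∈ Finset.Icc j i, MCstar ℓ q x i y * MC ℓ q x y j =
        ∏ k, (if i k = j k then (1 : ℂ) else 0) := by
  have hq1 : ∀ k : ℕ, q * q ^ (k : ℤ) ≠ 1 := by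
    intro k h0
    have h := hd1 (fun _ => k + 1) (fun _ => 0) (fun _ => by omega) ⟨0, hℓ⟩ ⟨0, hℓ⟩
    rw [show (((k + 1 : ℕ) : ℤ) - ((0 : ℕ) : ℤ)) = (k : ℤ) + 1 by push_cast; ring, qp_succ_nat] at h
    apply right_ne_zero_of_mul h
    simp [div_self (hx _)] at h0 ⊢
    rw [h0, sub_self]
  have hA : ∀ r s, r ≠ s → ∀ k : ℤ, x r / x s * q ^ k ≠ 1 := by
    intro r s hrs k h0
    have h := hd1 (fun t => if t = r then (k - 1).toNat + 1 else (1 - k).toNat)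
      (fun t => if t = r then (k - 1).toNat else (1 - k).toNat)
      (fun t => by split_ifs <;> omega) r s
    simp only [if_true, if_neg hrs.symm] at h
    rw [show ((((k - 1).toNat + 1 : ℕ) : ℤ) - ((k - 1).toNat : ℤ)) = ((0 : ℕ) : ℤ) + 1 by push_cast; ring,
      qp_succ_nat] at h
    apply right_ne_zero_of_mul h
    rw [show ((k - 1).toNat : ℤ) - ((1 - k).toNat : ℤ) = k - 1 by omega, zpow_sub_one₀ hq]
    have : q * (x r / x s) * (q ^ k * q⁻¹) = 1 := by
      rw [← h0]; field_simp
    rw [this]; simp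
  have hC : ∀ r s, r ≠ s → ∀ k : ℕ, x r * x s * q ^ (k : ℤ) ≠ 1 := by
    have key : ∀ r s, r < s → ∀ k : ℕ, x r * x s * q ^ (k : ℤ) ≠ 1 := by
      intro r s hrs k h0
      apply hd4 (fun t => if t = r then k else 0) r s hrs
      simp only [if_true, if_neg hrs.ne']
      rw [Nat.cast_zero, add_zero, h0, sub_self]
    intro r s hrs k
    rcases lt_or_gt_of_ne hrs with h | h
    · exact key r s h k
    · rw [mul_comm (x r)]; exact key s r h k
  have hD : ∀ r, ∀ k : ℕ, x r * x r * q * q ^ (k : ℤ) ≠ 1 := by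
    intro r k h0
    have h := hd2 (fun _ => k + 1) (fun _ => 0) (fun _ => by omega) r r
    rw [show (((k + 1 : ℕ) : ℤ) - ((0 : ℕ) : ℤ)) = (k : ℤ) + 1 by push_cast; ring, qp_succ_nat] at h
    apply right_ne_zero_of_mul h
    rw [sub_eq_zero, ← h0, Nat.cast_zero, add_zero, zpow_zero]
    ring
  intro i j
  by_cases hji : ∀ k, j k ≤ i k
  swap
  · have hemp : Finset.Icc j i = ∅ := Finset.Icc_eq_empty (fun h => hji h)
    rw [hemp, Finset.sum_empty]
    push Not at hji
    obtain ⟨k, hk⟩ := hji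
    exact (Finset.prod_eq_zero (Finset.mem_univ k) (if_neg (by omega))).symm
  by_cases hij : i = j
  · subst hij
    rw [Finset.Icc_self, Finset.sum_singleton]
    simp only [MCstar, MC, sub_self, qp_zero', if_true]
    have : ∀ r s : Fin ℓ, (if r < s then (1 - x r * x s * q ^ ((i r : ℤ) + (i s : ℤ))) /
        (1 - x r * x s * q ^ ((i r : ℤ) + (i s : ℤ))) else 1) = 1 := by
      intro r s
      split_ifs with h
      · exact div_self (hd4 i r s h)
      · rfl
    simp [this]
  obtain ⟨r0, hr0⟩ : ∃ r0, j r0 < i r0 := by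
    by_contra hcon
    push Not at hcon
    exact hij (funext fun k => le_antisymm (hcon k) (hji k))
  rw [Finset.prod_eq_zero (Finset.mem_univ r0) (if_neg (by omega))]
  obtain ⟨P, hP⟩ : ∃ P : Fin ℓ → ℕ → ℂ, P = fun (r : Fin ℓ) (t : ℕ) => x r * q ^ (t : ℤ) := ⟨_, rfl⟩
  obtain ⟨K, hK⟩ := term_eq q hq x hx hq1 hA hC hD i j hji P hP
  rw [Finset.sum_congr rfl hK, ← Finset.mul_sum]
  rw [← det_sum i j (fun r t => ∏ s, WW P i j r s t) (fun r t => P r t + (P r t)⁻¹),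
    det_vanish P i j hji r0 hr0, mul_zero]
  · intro r t
    rw [hP]
    exact mul_ne_zero (hx r) (zpow_ne_zero _ hq)
  · intro r s k l h
    rw [hP] at h
    simp only at h
    have hzl := zpow_ne_zero (l : ℤ) hq
    by_cases hrs : r = s
    · subst hrs
      refine ⟨rfl, ?_⟩
      have h' := mul_left_cancel₀ (hx r) h
      have aux : ∀ a b : ℕ, a < b → q ^ (a : ℤ) ≠ q ^ (b : ℤ) := by
        intro a b hab he
        apply hq1 (b - a - 1)
        have hza := zpow_ne_zero (a : ℤ) hq
        apply mul_left_cancel₀ hza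
        rw [mul_one, ← zpow_one_add₀ hq, ← zpow_add₀ hq, he]
        congr 1
        omega
      rcases lt_trichotomy k l with hkl | hkl | hkl
      · exact absurd h' (aux _ _ hkl)
      · exact hkl
      · exact absurd h'.symm (aux _ _ hkl)
    · exfalso
      apply hA r s hrs ((k : ℤ) - l)
      rw [zpow_sub₀ hq]
      have := hx s
      field_simp
      linear_combination h
  · intro r s hrs k l
    rw [hP]
    have := hC r s hrs (k + l)
    intro h0
    apply this
    rw [← h0]
    push_cast
    rw [zpow_add₀ hq]
    ring
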